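/- Let p : I × I → [0,∞) satisfy hypotheses (H2) and (H3), and set δ = δ₀^K. Then for all x ∈ I and all v, s, t ∈ Δ_x the following uniform Harnack inequalities hold in [0,∞]: G_{p,Δ_x}(s,t) ≤ δ^{−d(s,v)}·G_{p,Δ_x}(v,t) and G_{p,Δ_x}(s,t) ≤ δ^{−d(t,v)}·G_{p,Δ_x}(s,v). (Lemma 4.2 of the paper.) -/

import Mathlib

open scoped ENNReal

namespace Paper

/-- Words in the two letters `α, β`: the free monoid on two generators, as `List Bool`.
The head of the list is the leftmost letter. -/
abbrev Word := List Bool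

/-- Length of the longest common prefix of two lists. -/
def lcpLen : List Bool → List Bool → ℕ
  | a :: s, b :: t => if a = b then lcpLen s t + 1 else 0
  | _, _ => 0

/-- Length of the longest common suffix of two words. -/
def lcsLen (s t : Word) : ℕ := lcpLen s.reverse t.reverse

/-- The tree metric on `Word`: `d(s,t) = (|s| - k) + (|t| - k)`, `k` the length of the
longest common suffix. -/
def treeDist (s t : Word) : ℕ := (s.length - lcsLen s t) + (t.length - lcsLen s t)

/-- The branch `Δ_x = {u x : u ∈ I}` of words having `x` as a suffix. -/
def Delta (x : Word) : Set Word := {s | x <:+ s}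

/-- The geodesic segment `[s,t] = {v : d(s,v) + d(v,t) = d(s,t)}`. -/
def geodesic (s t : Word) : Set Word := {v | treeDist s v + treeDist v t = treeDist s t}

/-- Paths of `n` steps from `s` to `t` staying in `Ω`. -/
def pathSet {X : Type*} (Ω : Set X) (n : ℕ) (s t : X) : Set (Fin (n + 1) → X) :=
  {σ | σ 0 = s ∧ σ (Fin.last n) = t ∧ ∀ i, σ i ∈ Ω}

/-- The weight `∏ a(s_i, s_{i+1})` of a path, as an extended nonnegative real. -/
noncomputable def weightE {X : Type*} (a : X → X → ℝ) (n : ℕ) (σ : Fin (n + 1) → X) : ℝ≥0∞ :=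
  ∏ i : Fin n, ENNReal.ofReal (a (σ i.castSucc) (σ i.succ))

/-- The `n`-step kernel `a⁽ⁿ⁾(s,t)` of the kernel `a` on `Ω`, with values in `[0,∞]`. -/
noncomputable def nStepE {X : Type*} (Ω : Set X) (a : X → X → ℝ) (n : ℕ) (s t : X) : ℝ≥0∞ :=
  ∑' σ : pathSet Ω n s t, weightE a n σ.1

/-- The Green kernel `G_a(s,t) = Σ_n a⁽ⁿ⁾(s,t)` of `a` on `Ω`, with values in `[0,∞]`. -/
noncomputable def greenE {X : Type*} (Ω : Set X) (a : X → X → ℝ) (s t : X) : ℝ≥0∞ :=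
  ∑' n : ℕ, nStepE Ω a n s t

/-- The weight of a path, real version (for signed kernels). -/
noncomputable def weightR {X : Type*} (a : X → X → ℝ) (n : ℕ) (σ : Fin (n + 1) → X) : ℝ :=
  ∏ i : Fin n, a (σ i.castSucc) (σ i.succ)

/-- The `n`-step kernel of a signed kernel `a` on `Ω`. -/
noncomputable def nStepR {X : Type*} (Ω : Set X) (a : X → X → ℝ) (n : ℕ) (s t : X) : ℝ :=
  ∑' σ : pathSet Ω n s t, weightR a n σ.1

/-- The Green kernel of a signed kernel `a` on `Ω`, as a real number. -/
noncomputable def greenR {X : Type*} (Ω : Set X) (a : X → X → ℝ) (s t : X) : ℝ :=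
  ∑' n : ℕ, nStepR Ω a n s t

/-- The Green kernel of `|a|`: finiteness of this expresses absolute convergence of the
series defining the Green kernel of `a`. -/
noncomputable def greenAbs {X : Type*} (Ω : Set X) (a : X → X → ℝ) (s t : X) : ℝ≥0∞ :=
  greenE Ω (fun u v => |a u v|) s t

/-- (H1): finite range `S`. -/
def H1 (p : Word → Word → ℝ) (S : ℕ) : Prop := ∀ s t, S < treeDist s t → p s t = 0

/-- (H2): nonzero transition probabilities are bounded below by `δ₀`. -/
def H2 (p : Word → Word → ℝ) (δ₀ : ℝ) : Prop := ∀ s t, 0 < p s t → δ₀ ≤ p s t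

/-- (H3): uniform irreducibility. -/
def H3 (p : Word → Word → ℝ) (δ₀ : ℝ) (K : ℕ) : Prop :=
  ∀ s t, treeDist s t = 1 → ∃ k ≤ K, ∃ u : ℕ → Word, u 0 = s ∧ u k = t ∧
    ∀ i < k, ∀ x : Word, δ₀ ≤ p (u i ++ x) (u (i + 1) ++ x)

/-- The operator `(Pf)(s) = Σ_t p(s,t) f(t)` extends to a bounded operator of norm at most
`lam` on `ℓ²(X, m)`, expressed via the associated bilinear form on finitely supported
functions. -/
def opNormBound {X : Type*} (m : X → ℝ) (p : X → X → ℝ) (lam : ℝ) : Prop :=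
  ∀ f g : X → ℝ, (Function.support f).Finite → (Function.support g).Finite →
    |∑' s, m s * g s * ∑' t, p s t * f t| ≤
      lam * Real.sqrt (∑' x, m x * f x ^ 2) * Real.sqrt (∑' x, m x * g x ^ 2)

/-- (H4): there is a weight `m` for which `P` is bounded of norm at most `lam` on `ℓ²(I,m)`. -/
def H4 (p : Word → Word → ℝ) (m : Word → ℝ) (lam : ℝ) : Prop :=
  (∀ x, 0 < m x) ∧ opNormBound m p lam

/-- Substochasticity: `Σ_t p(s,t) ≤ 1` for every `s`. -/
def Substochastic (p : Word → Word → ℝ) : Prop :=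
  ∀ s, (∑' t, ENNReal.ofReal (p s t)) ≤ 1

/-- `b` is a `q`-perturbation of `p` on `Δ_z` (with constant `C`). -/
def Perturb (p b : Word → Word → ℝ) (z : Word) (q C : ℝ) : Prop :=
  ∀ s t, s ∈ Delta z → t ∈ Delta z →
    |b s t| ≤ p s t ∧ |b s t - p s t| ≤ C * q ^ s.length

/-- The word `ω|k = ω(k-1) ω(k-2) ⋯ ω(0)` of length `k` determined by an end `ω`. -/
def endWord (ω : ℕ → Bool) (k : ℕ) : Word := (List.range k).reverse.map ω

/-- The last-entrance kernel `M_p(s,u)`: sum over paths from `s` to `u` of length at least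
one whose second-to-last point lies outside `Δ_x`. -/
noncomputable def lastEnter (p : Word → Word → ℝ) (x s u : Word) : ℝ≥0∞ :=
  ∑' m : ℕ, ∑' σ : {σ : Fin (m + 2) → Word //
      σ ∈ pathSet Set.univ (m + 1) s u ∧ σ ((Fin.last m).castSucc) ∉ Delta x},
    weightE p (m + 1) σ.1

/-- The quantum integer `[n]_q = (q⁻ⁿ - qⁿ)/(q⁻¹ - q)`. -/
noncomputable def qInt (q : ℝ) (n : ℕ) : ℝ := (q ^ (-(n : ℤ)) - q ^ (n : ℤ)) / (q⁻¹ - q)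

/-- The lengths of the blocks in the canonical factorization of a word into maximal
alternating subwords. -/
def blockLens : Word → List ℕ
  | [] => []
  | [_] => [1]
  | a :: b :: rest =>
    match blockLens (b :: rest) with
    | [] => [1]
    | k :: ks => if a = b then 1 :: (k :: ks) else (k + 1) :: ks

/-- The quantum dimension `dim_q(x) = Π_i [|x_i| + 1]_q` over the blocks of `x`. -/
noncomputable def dimq (q : ℝ) (x : Word) : ℝ := ((blockLens x).map fun L => qInt q (L + 1)).prod

/-- The classical dimension `dim(x) = Π_i (|x_i| + 1)` over the blocks of `x`. -/
noncomputable def dimn (x : Word) : ℝ := ((blockLens x).map fun L => (L + 1 : ℝ)).prod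

/-- The involution `x ↦ x̄`: reverse the word and exchange the two letters. -/
def bar (x : Word) : Word := (x.map fun a => !a).reverse

/-- The fusion multiplicity `mᵗ_{r,s}`: the number of words `z` such that `r = r₀ z`,
`s = z̄ s₀`, `t = r₀ s₀` for some `r₀, s₀`. -/
noncomputable def fuse (r s t : Word) : ℕ :=
  {z : Word | ∃ r₀ s₀ : Word, r = r₀ ++ z ∧ s = bar z ++ s₀ ∧ t = r₀ ++ s₀}.ncard

/-- A finitely supported probability measure on `Word`. -/
def IsProbMeasure (μ : Word → ℝ) : Prop :=
  (∀ x, 0 ≤ μ x) ∧ (Function.support μ).Finite ∧ ∑' x, μ x = 1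

/-- The transition kernel `p_μ(s,t) = Σ_r μ(r) mᵗ_{r,s} dim_q(t)/(dim_q(r) dim_q(s))`. -/
noncomputable def pMu (q : ℝ) (μ : Word → ℝ) (s t : Word) : ℝ :=
  ∑' r, μ r * (fuse r s t : ℝ) * dimq q t / (dimq q r * dimq q s)

/-- The `q`-binomial coefficient. -/
noncomputable def qbinom (q : ℝ) (n k : ℕ) : ℝ :=
  q ^ (-((k * (n - k) : ℕ) : ℤ)) *
    ∏ i ∈ Finset.range k, (1 - q ^ (2 * (n - i))) / (1 - q ^ (2 * (k - i)))


theorem lcp_aux : ∀ (l m x : List Bool), x <+: l → x <+: m →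
    ∃ a b c, l = c ++ a ∧ m = c ++ b ∧ lcpLen l m = c.length ∧ x <+: c
  | [], m, x, hx, _ => ⟨[], m, [], by simp, by simp, by simp [lcpLen], hx⟩
  | a :: l, [], x, _, hx => ⟨a :: l, [], [], by simp, by simp, by simp [lcpLen], hx⟩
  | a :: l, b :: m, x, h1, h2 => by
    by_cases hab : a = b
    · subst hab
      cases x with
      | nil =>
        obtain ⟨a', b', c, e1, e2, e3, -⟩ := lcp_aux l m [] (by simp) (by simp)
        refine ⟨a', b', a :: c, by simp [e1], by simp [e2], by simp [lcpLen, e3], by simp⟩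
      | cons y x =>
        rw [List.cons_prefix_cons] at h1 h2
        obtain ⟨a', b', c, e1, e2, e3, e4⟩ := lcp_aux l m x h1.2 h2.2
        refine ⟨a', b', a :: c, by simp [e1], by simp [e2], by simp [lcpLen, e3], ?_⟩
        rw [List.cons_prefix_cons]
        exact ⟨h1.1, e4⟩
    · refine ⟨a :: l, b :: m, [], by simp, by simp, by simp [lcpLen, hab], ?_⟩
      cases x with
      | nil => simp
      | cons y x =>
        rw [List.cons_prefix_cons] at h1 h2
        exact absurd (h1.1.symm.trans h2.1) hab

theorem lcp_left : ∀ (l m : List Bool), lcpLen (l ++ m) l = l.length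
  | [], m => by cases m <;> simp [lcpLen]
  | a :: l, m => by simp [lcpLen, lcp_left l m]

theorem lcp_right : ∀ (l m : List Bool), lcpLen l (l ++ m) = l.length
  | [], m => by cases m <;> simp [lcpLen]
  | a :: l, m => by simp [lcpLen, lcp_right l m]

theorem treeDist_cons_left (b : Bool) (s : Word) : treeDist (b :: s) s = 1 := by
  simp [treeDist, lcsLen, lcp_left]

theorem treeDist_cons_right (b : Bool) (s : Word) : treeDist s (b :: s) = 1 := by
  simp [treeDist, lcsLen, lcp_right]

theorem decomp (x s v : Word) (hs : s ∈ Delta x) (hv : v ∈ Delta x) :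
    ∃ a b c : Word, s = a ++ (c ++ x) ∧ v = b ++ (c ++ x) ∧
      treeDist s v = a.length + b.length := by
  obtain ⟨a, b, c, e1, e2, e3, e4⟩ := lcp_aux s.reverse v.reverse x.reverse
    (List.reverse_prefix.2 hs) (List.reverse_prefix.2 hv)
  obtain ⟨c', hc⟩ := e4
  have h1 : s = a.reverse ++ c.reverse := by
    have := congrArg List.reverse e1; simpa using this
  have h2 : v = b.reverse ++ c.reverse := by
    have := congrArg List.reverse e2; simpa using this
  have h3 : c.reverse = c'.reverse ++ x := by
    rw [← hc]; simp
  refine ⟨a.reverse, b.reverse, c'.reverse, by rw [h1, h3], by rw [h2, h3], ?_⟩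
  have e3' : lcsLen s v = c.length := e3
  rw [treeDist, e3', h1, h2]
  simp

theorem chain (F : Word → ℝ≥0∞) (D : ℝ≥0∞) (x : Word)
    (h : ∀ s v : Word, treeDist s v = 1 → F (s ++ x) ≤ D * F (v ++ x))
    (s v : Word) (hs : s ∈ Delta x) (hv : v ∈ Delta x) :
    F s ≤ D ^ treeDist s v * F v := by
  obtain ⟨a, b, c, rfl, rfl, e⟩ := decomp x s v hs hv
  rw [e, pow_add, mul_assoc]
  have down : ∀ a : Word, F (a ++ (c ++ x)) ≤ D ^ a.length * F (c ++ x) := by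
    intro a
    induction a with
    | nil => simp
    | cons y a ih =>
      have := h (y :: (a ++ c)) (a ++ c) (treeDist_cons_left _ _)
      simp only [List.cons_append, List.append_assoc] at this ⊢
      calc _ ≤ _ := this
        _ ≤ D * (D ^ a.length * F (c ++ x)) := by gcongr
        _ = _ := by rw [List.length_cons, pow_succ']; ring
  have up : ∀ a : Word, F (c ++ x) ≤ D ^ a.length * F (a ++ (c ++ x)) := by
    intro a
    induction a with
    | nil => simp
    | cons y a ih =>
      have := h (a ++ c) (y :: (a ++ c)) (treeDist_cons_right _ _)
      simp only [List.cons_append, List.append_assoc] at this ⊢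
      calc _ ≤ _ := ih
        _ ≤ D ^ a.length * (D * F (y :: (a ++ (c ++ x)))) := by gcongr
        _ = _ := by rw [List.length_cons, pow_succ']; ring
  calc _ ≤ _ := down a
    _ ≤ _ := by gcongr; exact up b

theorem nStep_cons {X : Type*} (Ω : Set X) (a : X → X → ℝ) (n : ℕ) (v w t : X) (hv : v ∈ Ω) :
    ENNReal.ofReal (a v w) * nStepE Ω a n w t ≤ nStepE Ω a (n + 1) v t := by
  unfold nStepE
  rw [← ENNReal.tsum_mul_left]
  let f : pathSet Ω n w t → pathSet Ω (n + 1) v t := fun σ =>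
    ⟨Fin.cons v σ.1, by
      obtain ⟨h0, h1, h2⟩ := σ.2
      refine ⟨by simp, by rw [← Fin.succ_last, Fin.cons_succ]; exact h1, ?_⟩
      intro i
      refine Fin.cases (by simpa using hv) (fun j => by simpa using h2 j) i⟩
  have hf : Function.Injective f := by
    intro σ τ h
    have := congrArg Subtype.val h
    exact Subtype.ext (Fin.cons_right_injective (α := fun _ => X) v this)
  refine le_trans (le_of_eq ?_) (ENNReal.tsum_comp_le_tsum_of_injective hf _)
  refine tsum_congr fun σ => ?_
  have h0 := σ.2.1
  simp only [weightE, f]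
  rw [Fin.prod_univ_succ]
  simp [Fin.castSucc_succ, h0, ← Fin.succ_castSucc]

theorem nStep_snoc {X : Type*} (Ω : Set X) (a : X → X → ℝ) (n : ℕ) (s w t : X) (ht : t ∈ Ω) :
    ENNReal.ofReal (a w t) * nStepE Ω a n s w ≤ nStepE Ω a (n + 1) s t := by
  unfold nStepE
  rw [← ENNReal.tsum_mul_left]
  let f : pathSet Ω n s w → pathSet Ω (n + 1) s t := fun σ =>
    ⟨Fin.snoc (α := fun _ => X) σ.1 t, by
      obtain ⟨h0, h1, h2⟩ := σ.2
      refine ⟨?_, by simp, ?_⟩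
      · rw [← Fin.castSucc_zero, Fin.snoc_castSucc]; exact h0
      · intro i
        refine Fin.lastCases (by simpa using ht) (fun j => by simpa using h2 j) i⟩
  have hf : Function.Injective f := by
    intro σ τ h
    have := congrArg Subtype.val h
    exact Subtype.ext (Fin.snoc_left_injective (α := fun _ => X) t this)
  refine le_trans (le_of_eq ?_) (ENNReal.tsum_comp_le_tsum_of_injective hf _)
  refine tsum_congr fun σ => ?_
  have h0 := σ.2.2.1
  simp only [weightE, f]
  rw [Fin.prod_univ_castSucc]
  simp only [Fin.snoc_castSucc, Fin.succ_last, Fin.snoc_last, h0, Fin.succ_castSucc]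
  rw [mul_comm]

theorem green_cons {X : Type*} (Ω : Set X) (a : X → X → ℝ) (v w t : X) (hv : v ∈ Ω) :
    ENNReal.ofReal (a v w) * greenE Ω a w t ≤ greenE Ω a v t := by
  unfold greenE
  rw [← ENNReal.tsum_mul_left]
  exact (ENNReal.tsum_le_tsum fun n => nStep_cons Ω a n v w t hv).trans
    (ENNReal.tsum_comp_le_tsum_of_injective (add_left_injective 1) (fun n => nStepE Ω a n v t))

theorem green_snoc {X : Type*} (Ω : Set X) (a : X → X → ℝ) (s w t : X) (ht : t ∈ Ω) :
    ENNReal.ofReal (a w t) * greenE Ω a s w ≤ greenE Ω a s t := by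
  unfold greenE
  rw [← ENNReal.tsum_mul_left]
  exact (ENNReal.tsum_le_tsum fun n => nStep_snoc Ω a n s w t ht).trans
    (ENNReal.tsum_comp_le_tsum_of_injective (add_left_injective 1) (fun n => nStepE Ω a n s t))

theorem iter (f : ℕ → ℝ≥0∞) (d : ℝ≥0∞) (k : ℕ) (h : ∀ i < k, d * f (i + 1) ≤ f i) :
    d ^ k * f k ≤ f 0 := by
  induction k with
  | zero => simp
  | succ k ih =>
    calc d ^ (k + 1) * f (k + 1) = d ^ k * (d * f (k + 1)) := by ring
      _ ≤ d ^ k * f k := by gcongr; exact h k (by omega)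
      _ ≤ _ := ih fun i hi => h i (by omega)

theorem iter' (f : ℕ → ℝ≥0∞) (d : ℝ≥0∞) (k : ℕ) (h : ∀ i < k, d * f i ≤ f (i + 1)) :
    d ^ k * f 0 ≤ f k := by
  induction k with
  | zero => simp
  | succ k ih =>
    calc d ^ (k + 1) * f 0 = d * (d ^ k * f 0) := by ring
      _ ≤ d * f k := by gcongr; exact ih fun i hi => h i (by omega)
      _ ≤ _ := h k (by omega)

theorem treeDist_comm' (s t : Word) (h : treeDist s t = 1) : treeDist t s = 1 := by
  have : ∀ l m : List Bool, lcpLen l m = lcpLen m l := by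
    intro l
    induction l with
    | nil => intro m; cases m <;> simp [lcpLen]
    | cons a l ih =>
      intro m
      cases m with
      | nil => simp [lcpLen]
      | cons b m => simp [lcpLen, ih m, eq_comm]
  rw [treeDist, lcsLen, this, add_comm]
  exact h

theorem inv_aux (δ₀ : ℝ) (hδ₀ : δ₀ ∈ Set.Ioo (0 : ℝ) 1) (k K : ℕ) (hk : k ≤ K) (A B : ℝ≥0∞)
    (h : ENNReal.ofReal δ₀ ^ k * A ≤ B) : A ≤ (ENNReal.ofReal (δ₀ ^ K))⁻¹ * B := by
  have h1 : ENNReal.ofReal (δ₀ ^ K) * A ≤ B := by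
    refine le_trans ?_ h
    rw [← ENNReal.ofReal_pow hδ₀.1.le]
    gcongr ?_ * A
    exact ENNReal.ofReal_le_ofReal (pow_le_pow_of_le_one hδ₀.1.le hδ₀.2.le hk)
  have hne : ENNReal.ofReal (δ₀ ^ K) ≠ 0 := by
    simpa using pow_pos hδ₀.1 K
  calc A = (ENNReal.ofReal (δ₀ ^ K))⁻¹ * (ENNReal.ofReal (δ₀ ^ K) * A) := by
        rw [← mul_assoc, ENNReal.inv_mul_cancel hne ENNReal.ofReal_ne_top, one_mul]
    _ ≤ _ := by gcongr

/-- Lemma 4.2: uniform Harnack inequalities for the Green kernels `G_{p,Δ_x}` with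
`δ = δ₀^K`, holding in `[0,∞]`. -/
theorem lem_4_2 (p : Word → Word → ℝ) (hp : ∀ s t, 0 ≤ p s t)
    (δ₀ : ℝ) (hδ₀ : δ₀ ∈ Set.Ioo (0 : ℝ) 1) (K : ℕ)
    (h2 : H2 p δ₀) (h3 : H3 p δ₀ K) :
    ∀ x : Word, ∀ v ∈ Delta x, ∀ s ∈ Delta x, ∀ t ∈ Delta x,
      greenE (Delta x) p s t ≤
        (ENNReal.ofReal (δ₀ ^ K))⁻¹ ^ treeDist s v * greenE (Delta x) p v t ∧
      greenE (Delta x) p s t ≤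
        (ENNReal.ofReal (δ₀ ^ K))⁻¹ ^ treeDist t v * greenE (Delta x) p s v := by
  intro x v hv s hs t ht
  have hΔ : ∀ u : Word, u ++ x ∈ Delta x := fun u => List.suffix_append u x
  constructor
  · refine chain (fun w => greenE (Delta x) p w t) _ x ?_ s v hs hv
    intro a b hab
    obtain ⟨k, hk, u, hu0, huk, hu⟩ := h3 b a (treeDist_comm' a b hab)
    refine inv_aux δ₀ hδ₀ k K hk _ _ ?_
    have := iter (fun i => greenE (Delta x) p (u i ++ x) t) (ENNReal.ofReal δ₀) k ?_
    · simpa only [hu0, huk] using this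
    · intro i hi
      refine le_trans ?_ (green_cons (Delta x) p (u i ++ x) (u (i + 1) ++ x) t (hΔ _))
      gcongr
      exact hu i hi x
  · refine chain (fun w => greenE (Delta x) p s w) _ x ?_ t v ht hv
    intro a b hab
    obtain ⟨k, hk, u, hu0, huk, hu⟩ := h3 a b hab
    refine inv_aux δ₀ hδ₀ k K hk _ _ ?_
    have := iter' (fun i => greenE (Delta x) p s (u i ++ x)) (ENNReal.ofReal δ₀) k ?_
    · simpa only [hu0, huk] using this
    · intro i hi
      refine le_trans ?_ (green_snoc (Delta x) p s (u i ++ x) (u (i + 1) ++ x) (hΔ _))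
      gcongr
      exact hu i hi x

end Paper
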